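/- Fix ω ∈ P(S) with ω_j > 0 for all j ∈ S, and suppose θ_n > 0 satisfies θ_n·r_n(i,j) → r(i,j) ∈ [0,∞) for all i ≠ j ∈ S. Define A_n := (1/2) Σ_{j∈S} Σ_{k∈S, k≠j} (√(ω_k/π_n(V^k_n)) − √(ω_j/π_n(V^j_n)))² Σ_{x∈V^j_n} Σ_{y∈V^k_n} π_n(x)R_n(x,y) (this quantity equals the Donsker–Varadhan level-two rate functional of the chain with rates R_n evaluated at the measure μ_n := Σ_j ω_j π_n(·|V^j_n)). Let 𝕀(ω) := sup over functions h : S → (0,∞) of −Σ_{j∈S} ω_j (1/h(j)) Σ_{k≠j} r(j,k)(h(k) − h(j)). Then limsup_{n→∞} θ_n·A_n ≤ 𝕀(ω). -/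

import Mathlib

/-!
Write `p j = π_n(V^j_n)`, let `Q j k` be the symmetric flow between blocks, and let
`h j = √(ω_j / p_j)`. Expanding the square, the rescaled functional `θ A_n` is a sum of terms
`h_j² θ Q j k = ω_j θ r_n(j,k)`, which converge to `ω_j r(j,k)`, minus cross terms
`θ Q j k h_j h_k = √(ω_j θ r_n(j,k) · ω_k θ r_n(k,j))`, which converge to
`√(ω_j r(j,k) ω_k r(k,j))`. Hence `θ A_n` converges to an explicit limit `L`
(`tendsto_energy`).

The same functions `h` (depending on `n`) are used as trial functions in the variational problem
defining `𝕀(ω)`. Its value at `h` also converges to `L` (`tendsto_dvFunctional`), so `L ≤ 𝕀(ω)`.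
The limit rates need not be reversible and the ratios `h_k / h_j` may diverge, but where
`r(j,k) > 0` the identity `ω_j θ r_n(j,k) h_k / h_j = θ Q j k h_j h_k` controls them, and where
`r(j,k) = 0` the ratio does not enter. The supremum is over a bounded set (`dvFunctional_le`), so
it is not a junk value.
-/

open Filter

/-- The expression maximised over positive `h` in the variational formula for the level-two rate
functional at `ω` of the chain with rates `r`. -/
noncomputable def dvFunctional {m : ℕ} (r : Fin m → Fin m → ℝ) (ω h : Fin m → ℝ) : ℝ :=
  -∑ j : Fin m, ω j * ((1 / h j) * ∑ k ∈ Finset.univ.erase j, r j k * (h k - h j))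

/-- The common limit of the rescaled functionals and of the trial values: total weighted jump rate
minus the geometric means of the two weighted rates between each ordered pair of states. -/
noncomputable def limitValue {m : ℕ} (r : Fin m → Fin m → ℝ) (ω : Fin m → ℝ) : ℝ :=
  ∑ j : Fin m, ∑ k ∈ Finset.univ.erase j,
    (ω j * r j k - Real.sqrt ((ω j * r j k) * (ω k * r k j)))

theorem dvFunctional_eq {m : ℕ} (r : Fin m → Fin m → ℝ) (ω h : Fin m → ℝ)
    (hpos : ∀ j, 0 < h j) :
    dvFunctional r ω h = ∑ j : Fin m, ∑ k ∈ Finset.univ.erase j,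
      (ω j * r j k - ω j * (r j k * (h k / h j))) := by
  unfold dvFunctional
  rw [← Finset.sum_neg_distrib]
  refine Finset.sum_congr rfl fun j _ => ?_
  rw [Finset.mul_sum, Finset.mul_sum, ← Finset.sum_neg_distrib]
  refine Finset.sum_congr rfl fun k _ => ?_
  have := (hpos j).ne'
  field_simp
  ring

theorem dvFunctional_le {m : ℕ} (r : Fin m → Fin m → ℝ) (hr : ∀ i j, 0 ≤ r i j)
    (ω h : Fin m → ℝ) (hω : ∀ j, 0 < ω j) (hpos : ∀ j, 0 < h j) :
    dvFunctional r ω h ≤ ∑ j : Fin m, ∑ k ∈ Finset.univ.erase j, ω j * r j k := by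
  rw [dvFunctional_eq r ω h hpos]
  refine Finset.sum_le_sum fun j _ => Finset.sum_le_sum fun k _ => ?_
  have : 0 ≤ ω j * (r j k * (h k / h j)) :=
    mul_nonneg (hω j).le (mul_nonneg (hr j k) (div_pos (hpos k) (hpos j)).le)
  linarith

section Limits

variable {m : ℕ} (p : ℕ → Fin m → ℝ) (Q : ℕ → Fin m → Fin m → ℝ) (θ : ℕ → ℝ)
  (r : Fin m → Fin m → ℝ) (ω : Fin m → ℝ)

theorem cross_eq_sqrt (hp : ∀ n j, 0 < p n j) (hQ : ∀ n j k, 0 ≤ Q n j k)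
    (hsymm : ∀ n j k, Q n j k = Q n k j) (hθ : ∀ n, 0 < θ n) (hω : ∀ j, 0 < ω j)
    (n : ℕ) (j k : Fin m) :
    θ n * Q n j k * (Real.sqrt (ω j / p n j) * Real.sqrt (ω k / p n k)) =
      Real.sqrt ((ω j * (θ n * ((p n j)⁻¹ * Q n j k))) *
        (ω k * (θ n * ((p n k)⁻¹ * Q n k j)))) := by
  have h1 : (ω j * (θ n * ((p n j)⁻¹ * Q n j k))) * (ω k * (θ n * ((p n k)⁻¹ * Q n k j))) =
      (θ n * Q n j k) ^ 2 * ((ω j / p n j) * (ω k / p n k)) := by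
    rw [hsymm n k j]; ring
  rw [h1, Real.sqrt_mul (sq_nonneg _), Real.sqrt_sq (mul_nonneg (hθ n).le (hQ n j k)),
    Real.sqrt_mul (div_pos (hω j) (hp n j)).le]

theorem tendsto_cross (hp : ∀ n j, 0 < p n j) (hQ : ∀ n j k, 0 ≤ Q n j k)
    (hsymm : ∀ n j k, Q n j k = Q n k j) (hθ : ∀ n, 0 < θ n) (hω : ∀ j, 0 < ω j)
    (hconv : ∀ i j, i ≠ j →
      Tendsto (fun n => θ n * ((p n i)⁻¹ * Q n i j)) atTop (nhds (r i j)))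
    {j k : Fin m} (hjk : j ≠ k) :
    Tendsto (fun n => θ n * Q n j k * (Real.sqrt (ω j / p n j) * Real.sqrt (ω k / p n k)))
      atTop (nhds (Real.sqrt ((ω j * r j k) * (ω k * r k j)))) := by
  simp_rw [cross_eq_sqrt p Q θ ω hp hQ hsymm hθ hω]
  exact (((hconv j k hjk).const_mul _).mul ((hconv k j hjk.symm).const_mul _)).sqrt

theorem tendsto_energy (hp : ∀ n j, 0 < p n j) (hQ : ∀ n j k, 0 ≤ Q n j k)
    (hsymm : ∀ n j k, Q n j k = Q n k j) (hθ : ∀ n, 0 < θ n) (hω : ∀ j, 0 < ω j)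
    (hconv : ∀ i j, i ≠ j →
      Tendsto (fun n => θ n * ((p n i)⁻¹ * Q n i j)) atTop (nhds (r i j))) :
    Tendsto (fun n => θ n * ((1 / 2) * ∑ j : Fin m, ∑ k ∈ Finset.univ.erase j,
        (Real.sqrt (ω k / p n k) - Real.sqrt (ω j / p n j)) ^ 2 * Q n j k))
      atTop (nhds (limitValue r ω)) := by
  have hswap : ∑ j : Fin m, ∑ k ∈ Finset.univ.erase j, ω k * r k j =
      ∑ j : Fin m, ∑ k ∈ Finset.univ.erase j, ω j * r j k :=
    Finset.sum_comm' fun x y => by simp [eq_comm]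
  have hL : limitValue r ω = (1 / 2) * ∑ j : Fin m, ∑ k ∈ Finset.univ.erase j,
      (ω k * r k j + ω j * r j k - 2 * Real.sqrt ((ω j * r j k) * (ω k * r k j))) := by
    simp only [limitValue, Finset.sum_sub_distrib, Finset.sum_add_distrib, ← Finset.mul_sum]
    rw [hswap]
    simp only [← Finset.mul_sum]
    ring
  have hE : ∀ n, θ n * ((1 / 2) * ∑ j : Fin m, ∑ k ∈ Finset.univ.erase j,
        (Real.sqrt (ω k / p n k) - Real.sqrt (ω j / p n j)) ^ 2 * Q n j k) =
      (1 / 2) * ∑ j : Fin m, ∑ k ∈ Finset.univ.erase j,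
        (ω k * (θ n * ((p n k)⁻¹ * Q n k j)) + ω j * (θ n * ((p n j)⁻¹ * Q n j k)) -
          2 * (θ n * Q n j k * (Real.sqrt (ω j / p n j) * Real.sqrt (ω k / p n k)))) := by
    intro n
    rw [mul_left_comm, Finset.mul_sum]
    congr 1
    refine Finset.sum_congr rfl fun j _ => ?_
    rw [Finset.mul_sum]
    refine Finset.sum_congr rfl fun k _ => ?_
    rw [sub_sq, Real.sq_sqrt (div_pos (hω k) (hp n k)).le,
      Real.sq_sqrt (div_pos (hω j) (hp n j)).le, hsymm n k j]
    ring
  simp_rw [hE]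
  rw [hL]
  refine Tendsto.const_mul _ (tendsto_finsetSum _ fun j _ => tendsto_finsetSum _ fun k hk => ?_)
  have hjk : j ≠ k := (Finset.ne_of_mem_erase hk).symm
  exact (((hconv k j hjk.symm).const_mul _).add ((hconv j k hjk).const_mul _)).sub
    ((tendsto_cross p Q θ r ω hp hQ hsymm hθ hω hconv hjk).const_mul _)

/-- The trial functions `h j = √(ω_j / p_j)` are asymptotically optimal. -/
theorem tendsto_dvFunctional (hp : ∀ n j, 0 < p n j) (hQ : ∀ n j k, 0 ≤ Q n j k)
    (hsymm : ∀ n j k, Q n j k = Q n k j) (hθ : ∀ n, 0 < θ n) (hω : ∀ j, 0 < ω j)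
    (hconv : ∀ i j, i ≠ j →
      Tendsto (fun n => θ n * ((p n i)⁻¹ * Q n i j)) atTop (nhds (r i j))) :
    Tendsto (fun n => dvFunctional r ω fun j => Real.sqrt (ω j / p n j))
      atTop (nhds (limitValue r ω)) := by
  have hpos : ∀ n j, 0 < Real.sqrt (ω j / p n j) := fun n j =>
    Real.sqrt_pos.2 (div_pos (hω j) (hp n j))
  simp_rw [fun n => dvFunctional_eq r ω (fun j => Real.sqrt (ω j / p n j)) (hpos n)]
  refine tendsto_finsetSum _ fun j _ => tendsto_finsetSum _ fun k hk => ?_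
  have hjk : j ≠ k := (Finset.ne_of_mem_erase hk).symm
  refine tendsto_const_nhds.sub ?_
  by_cases h0 : r j k = 0
  · simp [h0]
  -- Replace `r j k` by the `n`-th rate times a factor tending to `1`; the remaining factor is
  -- the convergent cross term.
  have hratio : Tendsto (fun n => r j k / (θ n * ((p n j)⁻¹ * Q n j k))) atTop (nhds 1) := by
    have := (tendsto_const_nhds (x := r j k)).div (hconv j k hjk) h0
    rwa [div_self h0] at this
  have hmul := hratio.mul (tendsto_cross p Q θ r ω hp hQ hsymm hθ hω hconv hjk)
  rw [one_mul] at hmul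
  refine hmul.congr' ?_
  filter_upwards [(hconv j k hjk).eventually_ne h0] with n hn
  have hsq : Real.sqrt (ω j / p n j) ^ 2 = ω j / p n j :=
    Real.sq_sqrt (div_pos (hω j) (hp n j)).le
  have hωj : ω j = Real.sqrt (ω j / p n j) ^ 2 * p n j := by
    rw [hsq, div_mul_cancel₀ _ (hp n j).ne']
  have hQne : Q n j k ≠ 0 := fun h => hn (by simp [h])
  have h1 := (hpos n j).ne'
  have h2 := (hp n j).ne'
  have h3 := (hθ n).ne'
  generalize Real.sqrt (ω j / p n j) = s at *
  rw [hωj]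
  field_simp

end Limits

/-- `limsup θ_n A_n ≤ 𝕀(ω)`, where `A_n` is the Donsker–Varadhan
functional of the chain evaluated at `μ_n = Σ_j ω_j π_n(·|V^j_n)` and `𝕀` is the
level-two rate functional of the chain on `S` with rates `r`. -/
theorem stmt5
    (Vty : ℕ → Type) [∀ n, Fintype (Vty n)]
    (π : ∀ n, Vty n → ℝ) (R : ∀ n, Vty n → Vty n → ℝ)
    (hπpos : ∀ n x, 0 < π n x)
    (hπsum : ∀ n, ∑ x, π n x = 1)
    (hRnonneg : ∀ n x y, 0 ≤ R n x y)
    (hdb : ∀ n x y, π n x * R n x y = π n y * R n y x)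
    (m : ℕ) (V : ∀ n, Fin m → Finset (Vty n))
    (hVne : ∀ n j, (V n j).Nonempty)
    (hVpart : ∀ n, ∀ x : Vty n, ∃! j : Fin m, x ∈ V n j)
    (θ : ℕ → ℝ) (hθ : ∀ n, 0 < θ n)
    (r : Fin m → Fin m → ℝ) (hrnn : ∀ i j, 0 ≤ r i j)
    (hconv : ∀ i j : Fin m, i ≠ j →
      Tendsto (fun n => θ n * ((∑ x ∈ V n i, π n x)⁻¹ *
          ∑ x ∈ V n i, ∑ y ∈ V n j, π n x * R n x y)) atTop (nhds (r i j)))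
    (ω : Fin m → ℝ) (hωpos : ∀ j, 0 < ω j) (hωsum : ∑ j, ω j = 1) :
    limsup (fun n => ENNReal.ofReal (θ n *
        ((1 / 2) * ∑ j : Fin m, ∑ k ∈ Finset.univ.erase j,
          (Real.sqrt (ω k / ∑ x ∈ V n k, π n x) -
            Real.sqrt (ω j / ∑ x ∈ V n j, π n x)) ^ 2 *
          ∑ x ∈ V n j, ∑ y ∈ V n k, π n x * R n x y))) atTop ≤
      ENNReal.ofReal
        (⨆ h : {h : Fin m → ℝ // ∀ j, 0 < h j},
          -∑ j : Fin m, ω j * ((1 / h.1 j) *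
            ∑ k ∈ Finset.univ.erase j, r j k * (h.1 k - h.1 j))) := by
  have hp : ∀ n j, 0 < ∑ x ∈ V n j, π n x := fun n j =>
    Finset.sum_pos (fun x _ => hπpos n x) (hVne n j)
  have hQ : ∀ n j k, 0 ≤ ∑ x ∈ V n j, ∑ y ∈ V n k, π n x * R n x y := fun n j k =>
    Finset.sum_nonneg fun x _ => Finset.sum_nonneg fun y _ =>
      mul_nonneg (hπpos n x).le (hRnonneg n x y)
  have hsymm : ∀ n j k, ∑ x ∈ V n j, ∑ y ∈ V n k, π n x * R n x y =
      ∑ x ∈ V n k, ∑ y ∈ V n j, π n x * R n x y := fun n j k => by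
    rw [Finset.sum_comm]
    exact Finset.sum_congr rfl fun y _ => Finset.sum_congr rfl fun x _ => hdb n x y
  have hA := tendsto_energy (fun n j => ∑ x ∈ V n j, π n x)
    (fun n j k => ∑ x ∈ V n j, ∑ y ∈ V n k, π n x * R n x y) θ r ω hp hQ hsymm hθ hωpos hconv
  have hF := tendsto_dvFunctional (fun n j => ∑ x ∈ V n j, π n x)
    (fun n j k => ∑ x ∈ V n j, ∑ y ∈ V n k, π n x * R n x y) θ r ω hp hQ hsymm hθ hωpos hconv
  rw [(ENNReal.tendsto_ofReal hA).limsup_eq]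
  refine ENNReal.ofReal_le_ofReal (le_of_tendsto' hF fun n => ?_)
  have hbdd : BddAbove (Set.range fun h : {h : Fin m → ℝ // ∀ j, 0 < h j} =>
      dvFunctional r ω h.1) :=
    ⟨_, Set.forall_mem_range.2 fun h => dvFunctional_le r hrnn ω h.1 hωpos h.2⟩
  exact le_ciSup hbdd ⟨fun j => Real.sqrt (ω j / ∑ x ∈ V n j, π n x),
    fun j => Real.sqrt_pos.2 (div_pos (hωpos j) (hp n j))⟩
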